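/- Let G = (V,E) be a finite connected undirected graph with positive symmetric edge weights ω and total edge weight ω(G), and let G' be obtained from G by adding a new edge {a,b} of weight w > 0. Then for all vertices i and j, the commute time in G' satisfies κ'_{ij} ≤ (1 + w/ω(G))·κ_{ij}. -/

import Mathlib

open Finset

variable {V : Type*}

/-- The total weight incident to a vertex: `ω(i) = Σ_l ω(i,l)`. -/
noncomputable def vWeight [Fintype V] (w : V → V → ℝ) (i : V) : ℝ :=
  ∑ l, w i l

/-- The total weight of the graph (each edge counted once): `ω(G)`. -/
noncomputable def gWeight [Fintype V] (w : V → V → ℝ) : ℝ :=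
  (∑ i, ∑ l, w i l) / 2

/-- Transition probabilities of the random walk on the weighted graph:
from `i`, move to `l` with probability `ω(i,l)/ω(i)`. -/
noncomputable def walkStep [Fintype V] (w : V → V → ℝ) (i l : V) : ℝ :=
  w i l / vWeight w i

/-- `w` is a system of positive symmetric edge weights on a finite connected undirected
graph: symmetric, nonnegative, zero on the diagonal (and on non-edges), and the graph
whose edges are the pairs with positive weight is connected. -/
def IsWeight [Fintype V] (w : V → V → ℝ) : Prop :=
  (∀ a b, w a b = w b a) ∧ (∀ a b, 0 ≤ w a b) ∧ (∀ a, w a a = 0) ∧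
    (∀ a b, Relation.ReflTransGen (fun x y => 0 < w x y) a b)

/-- `hitSurv p j n i` is the probability that the Markov chain with transition kernel `p`
started at `i` has not visited `j` at any of the times `0, 1, …, n`. -/
noncomputable def hitSurv {S : Type*} [Fintype S] [DecidableEq S] (p : S → S → ℝ) (j : S) :
    ℕ → S → ℝ
  | 0 => fun i => if i = j then 0 else 1
  | n + 1 => fun i => if i = j then 0 else ∑ l, p i l * hitSurv p j n l

/-- Expected hitting time of `j` from `i`: the expected number of steps for the chain
started at `i` to first reach `j`, computed as `Σ_n P(T_j > n)`. -/
noncomputable def hitTime {S : Type*} [Fintype S] [DecidableEq S] (p : S → S → ℝ)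
    (i j : S) : ℝ :=
  ∑' n : ℕ, hitSurv p j n i

/-- A unit-current potential from `i` to `j`: Kirchhoff's equations when a unit current
enters at `i` and leaves at `j`. -/
def IsUnitPotential [Fintype V] (w : V → V → ℝ) (i j : V) (φ : V → ℝ) : Prop :=
  (∀ k, k ≠ i → k ≠ j → ∑ l, w k l * (φ k - φ l) = 0) ∧
    (∑ l, w i l * (φ i - φ l) = 1) ∧
    (∑ l, w j l * (φ j - φ l) = -1)

/-- `R` is the effective-resistance matrix of the weighted graph `w`:
`R a a = 0`, and for `a ≠ b`, `R a b = V_a - V_b` for a unit-current potential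
from `a` to `b`. -/
def IsResistance [Fintype V] (w : V → V → ℝ) (R : V → V → ℝ) : Prop :=
  (∀ a, R a a = 0) ∧
    ∀ a b, a ≠ b → ∃ φ, IsUnitPotential w a b φ ∧ R a b = φ a - φ b

/-- The weight function of an unweighted graph: weight `1` on edges, `0` elsewhere. -/
noncomputable def aw (G : SimpleGraph V) [DecidableRel G.Adj] (a b : V) : ℝ :=
  if G.Adj a b then 1 else 0

/-- Probability of a given trajectory: `trajProb p i xs` is the probability that the
chain started at `i` successively visits the vertices of the list `xs`. -/
noncomputable def trajProb {S : Type*} [Fintype S] (p : S → S → ℝ) : S → List S → ℝ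
  | _, [] => 1
  | i, x :: xs => p i x * trajProb p x xs

/-- Probability that the walk started at `i` has not visited every vertex by time `n`. -/
noncomputable def notCoveredProb [Fintype V] [DecidableEq V] (p : V → V → ℝ) (n : ℕ)
    (i : V) : ℝ :=
  ∑ xs : Fin n → V, trajProb p i (List.ofFn xs) *
    (if (i :: List.ofFn xs).toFinset = Finset.univ then 0 else 1)

/-- The cover time from `i`: the expected number of steps for the walk started at `i`
to have visited every vertex, computed as `Σ_n P(T_cov > n)`. -/
noncomputable def coverTime [Fintype V] [DecidableEq V] (p : V → V → ℝ) (i : V) : ℝ :=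
  ∑' n : ℕ, notCoveredProb p n i

/-- `visitSurv p j k n i` is the probability that the chain started at `i` is at `k` at
time `n` without having visited `j` at any of the times `0, …, n`. -/
noncomputable def visitSurv [Fintype V] [DecidableEq V] (p : V → V → ℝ) (j k : V) :
    ℕ → V → ℝ
  | 0 => fun i => if i = j then 0 else if i = k then 1 else 0
  | n + 1 => fun i => if i = j then 0 else ∑ l, p i l * visitSurv p j k n l

/-- `expVisits p i j k` is the expected number of visits to `k` (counting time `0`) of
the chain started at `i` strictly before its first visit to `j`. -/
noncomputable def expVisits [Fintype V] [DecidableEq V] (p : V → V → ℝ) (i j k : V) : ℝ :=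
  ∑' n : ℕ, visitSurv p j k n i

/-- `reachBeforeAux p i j n l` is the probability that the walk started at `l` reaches `j`
within `n` steps without visiting `i` first. -/
noncomputable def reachBeforeAux [Fintype V] [DecidableEq V] (p : V → V → ℝ) (i j : V) :
    ℕ → V → ℝ
  | 0 => fun l => if l = j then 1 else 0
  | n + 1 => fun l =>
      if l = j then 1 else if l = i then 0 else ∑ m, p l m * reachBeforeAux p i j n m

/-- The probability that the walk started at `i` reaches `j` before returning to `i`:
one step from `i` to `l`, then reach `j` before `i` (monotone limit in `n`). -/
noncomputable def escapeProb [Fintype V] [DecidableEq V] (p : V → V → ℝ) (i j : V) : ℝ :=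
  ∑ l, p i l * ⨆ n, reachBeforeAux p i j n l

/-- `hitSurvSet p F n x` is the probability that the chain started at `x` has not visited
the set `F` at any of the times `0, …, n`. -/
noncomputable def hitSurvSet {S : Type*} [Fintype S] (p : S → S → ℝ) (F : S → Prop)
    [DecidablePred F] : ℕ → S → ℝ
  | 0 => fun x => if F x then 0 else 1
  | n + 1 => fun x => if F x then 0 else ∑ y, p x y * hitSurvSet p F n y

/-- Expected hitting time of the set `F` from `x`, computed as `Σ_n P(T_F > n)`. -/
noncomputable def hitTimeSet {S : Type*} [Fintype S] (p : S → S → ℝ) (F : S → Prop)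
    [DecidablePred F] (x : S) : ℝ :=
  ∑' n : ℕ, hitSurvSet p F n x

/-- The associated chain `𝒢` on pairs `(P, i)` (visited set, current vertex): from
`(P, i)` it moves to `(P ∪ {j}, j)` with probability `ω(i,j)/ω(i)`. -/
noncomputable def pairStep [Fintype V] [DecidableEq V] (w : V → V → ℝ)
    (s t : Finset V × V) : ℝ :=
  if t.1 = insert t.2 s.1 then walkStep w s.2 t.2 else 0

/-- `exitProbAux p P j n i` is the probability that the walk started at `i` leaves `P`
within `n` steps and that the first vertex visited outside `P` is `j`. -/
noncomputable def exitProbAux [Fintype V] [DecidableEq V] (p : V → V → ℝ) (P : Finset V)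
    (j : V) : ℕ → V → ℝ
  | 0 => fun i => if i ∈ P then 0 else if i = j then 1 else 0
  | n + 1 => fun i =>
      if i ∈ P then ∑ l, p i l * exitProbAux p P j n l else if i = j then 1 else 0

/-- The probability that the first vertex outside `P` visited by the walk started at `i`
is `j` (monotone limit in the number of allowed steps). -/
noncomputable def exitProb [Fintype V] [DecidableEq V] (p : V → V → ℝ) (P : Finset V)
    (i j : V) : ℝ :=
  ⨆ n, exitProbAux p P j n i

/-- The negated weighted Laplacian `Δ` of the weighted graph `w` on `Fin n`. -/
noncomputable def negLaplacian (n : ℕ) (w : Fin n → Fin n → ℝ) :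
    Matrix (Fin n) (Fin n) ℝ :=
  Matrix.of fun k l => if k = l then -(∑ m, w k m) else w k l

/-- `Δ₂`: the negated weighted Laplacian with its first row replaced by the first row of
the identity matrix. -/
noncomputable def delta2 (n : ℕ) (hn : 0 < n) (w : Fin n → Fin n → ℝ) :
    Matrix (Fin n) (Fin n) ℝ :=
  (negLaplacian n w).updateRow ⟨0, hn⟩ (fun l => if l = ⟨0, hn⟩ then 1 else 0)

/-- The weight function obtained from `w` by adding weight `u` on the edge `{a, b}`. -/
noncomputable def addEdge [DecidableEq V] (w : V → V → ℝ) (a b : V) (u : ℝ)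
    (x y : V) : ℝ :=
  w x y + (if (x = a ∧ y = b) ∨ (x = b ∧ y = a) then u else 0)

/-!
For `i ≠ j`, the functions `x ↦ h_{xj}` and `x ↦ h_{xi}` solve the same Poisson equation up to
point sources: the weighted Laplacian sends them to `ω - 2 ω(G) δ_j` and `ω - 2 ω(G) δ_i`. Hence
`φ(x) = (h_{xj} - h_{xi}) / (2 ω(G))` is a unit potential from `i` to `j`, and
`κ_{ij} = 2 ω(G) (φ(i) - φ(j))`. It remains to see that the potential drop does not increase with
the weights. Let `φ` and `ψ` be unit potentials for the weights `w ≤ v`. Green's identity gives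
`E_w(φ, g) = g(i) - g(j)` and `E_v(ψ, g) = g(i) - g(j)` for every `g`, and
`E_w(ψ, ψ) ≤ E_v(ψ, ψ)`. Hence
`0 ≤ E_w(φ - ψ, φ - ψ) = E_w(φ, φ) - 2 E_w(φ, ψ) + E_w(ψ, ψ)` is at most
`(φ(i) - φ(j)) - 2 (ψ(i) - ψ(j)) + (ψ(i) - ψ(j))`.
-/

/-- The weighted Laplacian `(L f)(x) = Σ_l ω(x,l) (f(x) - f(l))`, with the sign that makes it
positive semidefinite. -/
noncomputable def laplacian [Fintype V] (w : V → V → ℝ) : (V → ℝ) →ₗ[ℝ] V → ℝ where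
  toFun f x := ∑ l, w x l * (f x - f l)
  map_add' f g := by
    ext x
    simp only [Pi.add_apply, ← sum_add_distrib]
    exact sum_congr rfl fun l _ => by ring
  map_smul' c f := by
    ext x
    simp only [Pi.smul_apply, smul_eq_mul, mul_sum, RingHom.id_apply]
    exact sum_congr rfl fun l _ => by ring

/-- The Dirichlet form (energy) of a weighted graph. The factor `1/2` makes each edge count
once. -/
noncomputable def dirichletForm [Fintype V] (w : V → V → ℝ) (f g : V → ℝ) : ℝ :=
  (∑ x, ∑ l, w x l * ((f x - f l) * (g x - g l))) / 2

/-- Nonnegative weights under which every vertex can be reached from every other along pairs of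
positive weight. Neither symmetry nor a zero diagonal is required. -/
structure IsIrreducibleWeight (w : V → V → ℝ) : Prop where
  nonneg (x y : V) : 0 ≤ w x y
  reachable (x y : V) : Relation.ReflTransGen (fun s t => 0 < w s t) x y

/-- The commute time `κ_{ij} = h_{ij} + h_{ji}` of the random walk on a weighted graph. -/
noncomputable def commuteTime [Fintype V] [DecidableEq V] (w : V → V → ℝ) (i j : V) : ℝ :=
  hitTime (walkStep w) i j + hitTime (walkStep w) j i

section Laplacian

variable [Fintype V] {w w' : V → V → ℝ}

theorem laplacian_apply (w : V → V → ℝ) (f : V → ℝ) (x : V) :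
    laplacian w f x = ∑ l, w x l * (f x - f l) :=
  rfl

theorem dirichletForm_comm (w : V → V → ℝ) (f g : V → ℝ) :
    dirichletForm w f g = dirichletForm w g f := by
  simp only [dirichletForm, mul_comm]

theorem dirichletForm_sub_sub (w : V → V → ℝ) (f g : V → ℝ) :
    dirichletForm w (f - g) (f - g) =
      dirichletForm w f f - 2 * dirichletForm w f g + dirichletForm w g g := by
  simp only [dirichletForm, mul_div_assoc', ← sub_div, ← add_div, mul_sum, ← sum_sub_distrib,
    ← sum_add_distrib, Pi.sub_apply]
  congr! 3
  ring

theorem dirichletForm_self_nonneg (hw : ∀ x y, 0 ≤ w x y) (f : V → ℝ) :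
    0 ≤ dirichletForm w f f :=
  div_nonneg (sum_nonneg fun _ _ => sum_nonneg fun _ _ =>
    mul_nonneg (hw _ _) (mul_self_nonneg _)) zero_le_two

theorem dirichletForm_self_mono (hle : ∀ x y, w x y ≤ w' x y) (f : V → ℝ) :
    dirichletForm w f f ≤ dirichletForm w' f f := by
  unfold dirichletForm
  gcongr with x _ l _
  · exact mul_self_nonneg _
  · exact hle x l

theorem dirichletForm_eq_sum_laplacian_mul (hsymm : ∀ x y, w x y = w y x) (f g : V → ℝ) :
    dirichletForm w f g = ∑ x, laplacian w f x * g x := by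
  have hdiag : ∑ x, ∑ l, w x l * (f x - f l) * g x = ∑ x, laplacian w f x * g x := by
    simp only [laplacian_apply, sum_mul]
  have hswap : ∑ x, ∑ l, w x l * (f x - f l) * g l = -∑ x, laplacian w f x * g x := by
    rw [sum_comm, ← hdiag]
    simp only [← sum_neg_distrib]
    exact sum_congr rfl fun x _ => sum_congr rfl fun l _ => by rw [hsymm]; ring
  calc dirichletForm w f g
      = (∑ x, ∑ l, (w x l * (f x - f l) * g x - w x l * (f x - f l) * g l)) / 2 := by
        simp only [dirichletForm, ← mul_assoc, mul_sub (_ * _) (g _)]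
    _ = ∑ x, laplacian w f x * g x := by
        simp only [sum_sub_distrib, hdiag, hswap]
        ring

theorem sum_laplacian (hsymm : ∀ x y, w x y = w y x) (f : V → ℝ) :
    ∑ x, laplacian w f x = 0 := by
  simpa [dirichletForm] using (dirichletForm_eq_sum_laplacian_mul hsymm f 1).symm

end Laplacian

namespace IsUnitPotential

variable [Fintype V] {w w' : V → V → ℝ} {i j : V} {φ φ' : V → ℝ}

theorem iff_laplacian_eq [DecidableEq V] :
    IsUnitPotential w i j φ ↔ i ≠ j ∧ laplacian w φ = Pi.single i 1 - Pi.single j 1 := by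
  constructor
  · rintro ⟨hoff, hi, hj⟩
    have hij : i ≠ j := by
      rintro rfl
      linarith
    refine ⟨hij, funext fun x => ?_⟩
    rcases eq_or_ne x i with rfl | hxi
    · simpa [laplacian_apply, hij] using hi
    rcases eq_or_ne x j with rfl | hxj
    · simpa [laplacian_apply, hxi] using hj
    · simpa [laplacian_apply, hxi, hxj] using hoff x hxi hxj
  · rintro ⟨hij, hL⟩
    simp only [IsUnitPotential, ← laplacian_apply, hL]
    exact ⟨fun k hki hkj => by simp [hki, hkj], by simp [hij], by simp [hij.symm]⟩

theorem dirichletForm_eq (hsymm : ∀ x y, w x y = w y x) (h : IsUnitPotential w i j φ)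
    (g : V → ℝ) : dirichletForm w φ g = g i - g j := by
  classical
  rw [dirichletForm_eq_sum_laplacian_mul hsymm, (iff_laplacian_eq.1 h).2]
  simp [sub_mul, sum_sub_distrib, Pi.single_apply]

theorem sub_eq_sub (hsymm : ∀ x y, w x y = w y x) (h : IsUnitPotential w i j φ)
    (h' : IsUnitPotential w i j φ') : φ i - φ j = φ' i - φ' j := by
  rw [← h'.dirichletForm_eq hsymm φ, ← h.dirichletForm_eq hsymm φ', dirichletForm_comm]

theorem sub_le_sub_of_le (hw : ∀ x y, 0 ≤ w x y) (hsymm : ∀ x y, w x y = w y x)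
    (hsymm' : ∀ x y, w' x y = w' y x) (hle : ∀ x y, w x y ≤ w' x y)
    (h : IsUnitPotential w i j φ) (h' : IsUnitPotential w' i j φ') :
    φ' i - φ' j ≤ φ i - φ j := by
  have hsq : 0 ≤ dirichletForm w (φ - φ') (φ - φ') := dirichletForm_self_nonneg hw _
  have henergy : dirichletForm w φ' φ' ≤ φ' i - φ' j :=
    (dirichletForm_self_mono hle φ').trans_eq (h'.dirichletForm_eq hsymm' φ')
  rw [dirichletForm_sub_sub, h.dirichletForm_eq hsymm, h.dirichletForm_eq hsymm] at hsq
  linarith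

end IsUnitPotential

namespace IsIrreducibleWeight

variable {w w' : V → V → ℝ}

theorem mono (hw : IsIrreducibleWeight w) (hle : ∀ x y, w x y ≤ w' x y) :
    IsIrreducibleWeight w' where
  nonneg x y := (hw.nonneg x y).trans (hle x y)
  reachable x y := Relation.ReflTransGen.mono (fun s t hst => hst.trans_le (hle s t)) _ _
    (hw.reachable x y)

variable [Fintype V]

theorem vWeight_pos (hw : IsIrreducibleWeight w) {x y : V} (hxy : x ≠ y) : 0 < vWeight w x := by
  obtain h | ⟨z, hz, -⟩ := Relation.ReflTransGen.cases_head (hw.reachable x y)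
  · exact absurd h hxy
  · exact sum_pos' (fun l _ => hw.nonneg x l) ⟨z, mem_univ z, hz⟩

theorem walkStep_nonneg (hw : IsIrreducibleWeight w) (x y : V) : 0 ≤ walkStep w x y :=
  div_nonneg (hw.nonneg x y) (sum_nonneg fun l _ => hw.nonneg x l)

theorem gWeight_pos (hw : IsIrreducibleWeight w) {x y : V} (hxy : x ≠ y) : 0 < gWeight w :=
  half_pos <| sum_pos' (fun s _ => sum_nonneg fun l _ => hw.nonneg s l)
    ⟨x, mem_univ x, hw.vWeight_pos hxy⟩

theorem le_of_laplacian_nonneg (hw : IsIrreducibleWeight w) {j : V} {f : V → ℝ}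
    (hf : ∀ x, x ≠ j → 0 ≤ laplacian w f x) (x : V) : f j ≤ f x := by
  have : Nonempty V := ⟨j⟩
  obtain ⟨m, hm⟩ := Finite.exists_min f
  -- Off `j`, a minimum of a superharmonic function is shared by all neighbours.
  have hspread : ∀ s t, s ≠ j → f s = f m → 0 < w s t → f t = f m := by
    intro s t hsj hsm hst
    have hterm : ∀ l ∈ univ, w s l * (f s - f l) ≤ 0 := fun l _ =>
      mul_nonpos_of_nonneg_of_nonpos (hw.nonneg s l) (sub_nonpos.2 (hsm ▸ hm l))
    have hzero := (sum_eq_zero_iff_of_nonpos hterm).1 ((sum_nonpos hterm).antisymm (hf s hsj))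
    have hst_eq := (mul_eq_zero.1 (hzero t (mem_univ t))).resolve_left hst.ne'
    linarith
  have hmin : ∀ s, f s = f m → f j = f m := by
    intro s
    induction hw.reachable s j using Relation.ReflTransGen.head_induction_on with
    | refl => exact id
    | @head s t hst _ ih =>
      intro hs
      rcases eq_or_ne s j with rfl | hsj
      · exact hs
      · exact ih (hspread s t hsj hs hst)
  exact (hmin m rfl).trans_le (hm x)

theorem exists_laplacian_eq (hw : IsIrreducibleWeight w) (j : V) (g : V → ℝ) :
    ∃ f : V → ℝ, f j = 0 ∧ ∀ x, x ≠ j → laplacian w f x = g x := by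
  classical
  let T : (V → ℝ) →ₗ[ℝ] V → ℝ := LinearMap.pi fun x =>
    if x = j then LinearMap.proj j else LinearMap.proj x ∘ₗ laplacian w
  have hT_self (f : V → ℝ) : T f j = f j := by simp [T]
  have hT_ne (f : V → ℝ) {x : V} (hx : x ≠ j) : T f x = laplacian w f x := by simp [T, hx]
  have hinj : Function.Injective T := by
    refine (injective_iff_map_eq_zero T).2 fun f hf => funext fun x => ?_
    have hfj : f j = 0 := by rw [← hT_self f, hf, Pi.zero_apply]
    have hharm : ∀ y, y ≠ j → laplacian w f y = 0 := fun y hy => by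
      rw [← hT_ne f hy, hf, Pi.zero_apply]
    have hge : f j ≤ f x := hw.le_of_laplacian_nonneg (fun y hy => (hharm y hy).ge) x
    have hle : -f j ≤ -f x :=
      hw.le_of_laplacian_nonneg (f := -f) (fun y hy => by simp [hharm y hy]) x
    exact (le_antisymm (neg_le_neg_iff.1 hle) hge).trans hfj
  obtain ⟨f, hf⟩ := LinearMap.injective_iff_surjective.1 hinj (Function.update g j 0)
  refine ⟨f, ?_, fun x hx => ?_⟩
  · rw [← hT_self f, hf, Function.update_self]
  · rw [← hT_ne f hx, hf, Function.update_of_ne hx]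

end IsIrreducibleWeight

section HittingTime

variable {S : Type*} [Fintype S] [DecidableEq S] {p : S → S → ℝ}

theorem hitSurv_nonneg (hp : ∀ x y, 0 ≤ p x y) (j : S) (n : ℕ) (x : S) :
    0 ≤ hitSurv p j n x := by
  induction n generalizing x with
  | zero => exact ite_nonneg le_rfl zero_le_one
  | succ n ih => exact ite_nonneg le_rfl (sum_nonneg fun l _ => mul_nonneg (hp x l) (ih l))

theorem hitSurv_self (p : S → S → ℝ) (j : S) (n : ℕ) : hitSurv p j n j = 0 := by
  cases n <;> exact if_pos rfl

theorem hitTime_self (p : S → S → ℝ) (j : S) : hitTime p j j = 0 := by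
  simp only [hitTime, hitSurv_self, tsum_zero]

theorem sum_range_hitSurv_le (hp : ∀ x y, 0 ≤ p x y) {j : S} {f : S → ℝ} (hf : ∀ x, 0 ≤ f x)
    (hsuper : ∀ x, x ≠ j → 1 + ∑ l, p x l * f l ≤ f x) (n : ℕ) (x : S) :
    ∑ k ∈ range n, hitSurv p j k x ≤ f x := by
  induction n generalizing x with
  | zero => simpa only [range_zero, sum_empty] using hf x
  | succ n ih =>
    rcases eq_or_ne x j with rfl | hx
    · simpa only [hitSurv_self, sum_const_zero] using hf x
    calc ∑ k ∈ range (n + 1), hitSurv p j k x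
        = 1 + ∑ l, p x l * ∑ k ∈ range n, hitSurv p j k l := by
          simp only [sum_range_succ', hitSurv, hx, if_false, mul_sum]
          rw [sum_comm, add_comm]
      _ ≤ 1 + ∑ l, p x l * f l := by
          gcongr with l
          · exact hp x l
          · exact ih l
      _ ≤ f x := hsuper x hx

theorem summable_hitSurv_of_superharmonic (hp : ∀ x y, 0 ≤ p x y) {j : S} {f : S → ℝ}
    (hf : ∀ x, 0 ≤ f x) (hsuper : ∀ x, x ≠ j → 1 + ∑ l, p x l * f l ≤ f x) (x : S) :
    Summable fun n => hitSurv p j n x :=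
  summable_of_sum_range_le (fun n => hitSurv_nonneg hp j n x)
    fun n => sum_range_hitSurv_le hp hf hsuper n x

theorem hitTime_eq_one_add {j : S} (hsum : ∀ y, Summable fun n => hitSurv p j n y) {x : S}
    (hx : x ≠ j) : hitTime p x j = 1 + ∑ l, p x l * hitTime p l j := by
  rw [hitTime, (hsum x).tsum_eq_zero_add]
  simp only [hitSurv, hx, if_false, hitTime]
  rw [Summable.tsum_finsetSum fun l _ => (hsum l).mul_left _]
  simp only [tsum_mul_left]

end HittingTime

section CommuteTime

variable [Fintype V] {w w' : V → V → ℝ}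

theorem sum_vWeight (w : V → V → ℝ) : ∑ x, vWeight w x = 2 * gWeight w := by
  simp only [vWeight, gWeight]
  ring

theorem laplacian_eq_vWeight_iff {x : V} (hx : vWeight w x ≠ 0) (f : V → ℝ) :
    laplacian w f x = vWeight w x ↔ f x = 1 + ∑ l, walkStep w x l * f l := by
  have havg : laplacian w f x = vWeight w x * (f x - ∑ l, walkStep w x l * f l) := by
    simp only [laplacian_apply, mul_sub, sum_sub_distrib, ← sum_mul, mul_sum, walkStep,
      ← mul_assoc, mul_div_cancel₀ _ hx]
    rfl
  rw [havg, mul_eq_left₀ hx, sub_eq_iff_eq_add]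

variable [DecidableEq V]

theorem summable_hitSurv_walkStep (hw : IsIrreducibleWeight w) (j x : V) :
    Summable fun n => hitSurv (walkStep w) j n x := by
  obtain ⟨f, hfj, hLf⟩ := hw.exists_laplacian_eq j (vWeight w)
  have hf_nonneg : ∀ y, 0 ≤ f y := fun y =>
    hfj ▸ hw.le_of_laplacian_nonneg (fun z hz => hLf z hz ▸ (hw.vWeight_pos hz).le) y
  exact summable_hitSurv_of_superharmonic hw.walkStep_nonneg hf_nonneg
    (fun y hy => ((laplacian_eq_vWeight_iff (hw.vWeight_pos hy).ne' f).1 (hLf y hy)).ge) x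

theorem laplacian_hitTime_of_ne (hw : IsIrreducibleWeight w) {x j : V} (hx : x ≠ j) :
    laplacian w (fun y => hitTime (walkStep w) y j) x = vWeight w x :=
  (laplacian_eq_vWeight_iff (hw.vWeight_pos hx).ne' _).2
    (hitTime_eq_one_add (summable_hitSurv_walkStep hw j) hx)

theorem laplacian_hitTime (hw : IsIrreducibleWeight w) (hsymm : ∀ x y, w x y = w y x) (j : V) :
    laplacian w (fun y => hitTime (walkStep w) y j) =
      vWeight w - Pi.single j (2 * gWeight w) := by
  ext x
  rcases eq_or_ne x j with rfl | hx
  · -- The value at `j` is forced, since the Laplacian has total mass zero.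
    have hmass := sum_laplacian hsymm fun y => hitTime (walkStep w) y x
    have htotal := sum_vWeight w
    rw [← add_sum_erase _ _ (mem_univ x)] at hmass htotal
    rw [sum_congr rfl fun y hy => laplacian_hitTime_of_ne hw (ne_of_mem_erase hy)] at hmass
    rw [Pi.sub_apply, Pi.single_eq_same]
    linarith
  · rw [laplacian_hitTime_of_ne hw hx, Pi.sub_apply, Pi.single_eq_of_ne hx, sub_zero]

theorem isUnitPotential_hitTime_sub (hw : IsIrreducibleWeight w)
    (hsymm : ∀ x y, w x y = w y x) {i j : V} (hij : i ≠ j) :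
    IsUnitPotential w i j ((2 * gWeight w)⁻¹ •
      ((fun x => hitTime (walkStep w) x j) - fun x => hitTime (walkStep w) x i)) := by
  have hpos : 0 < 2 * gWeight w := mul_pos two_pos (hw.gWeight_pos hij)
  refine IsUnitPotential.iff_laplacian_eq.2 ⟨hij, ?_⟩
  rw [map_smul, map_sub, laplacian_hitTime hw hsymm, laplacian_hitTime hw hsymm,
    sub_sub_sub_cancel_left, smul_sub, ← Pi.single_smul, ← Pi.single_smul, smul_eq_mul,
    inv_mul_cancel₀ hpos.ne']

theorem IsUnitPotential.commuteTime_eq (hw : IsIrreducibleWeight w)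
    (hsymm : ∀ x y, w x y = w y x) {i j : V} {φ : V → ℝ} (h : IsUnitPotential w i j φ) :
    commuteTime w i j = 2 * gWeight w * (φ i - φ j) := by
  have hij : i ≠ j := (iff_laplacian_eq.1 h).1
  have hpos : 0 < gWeight w := hw.gWeight_pos hij
  rw [h.sub_eq_sub hsymm (isUnitPotential_hitTime_sub hw hsymm hij)]
  simp only [commuteTime, Pi.smul_apply, Pi.sub_apply, smul_eq_mul, hitTime_self]
  field_simp
  ring

theorem commute_time_edge_addition_general (hw : IsIrreducibleWeight w)
    (hsymm : ∀ x y, w x y = w y x) (hsymm' : ∀ x y, w' x y = w' y x)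
    (hle : ∀ x y, w x y ≤ w' x y) (i j : V) :
    commuteTime w' i j ≤ gWeight w' / gWeight w * commuteTime w i j := by
  rcases eq_or_ne i j with rfl | hij
  · simp only [commuteTime, hitTime_self, add_zero, mul_zero, le_refl]
  have hw' : IsIrreducibleWeight w' := hw.mono hle
  have hpos : 0 < gWeight w := hw.gWeight_pos hij
  have hpos' : 0 < gWeight w' := hw'.gWeight_pos hij
  have hφ := isUnitPotential_hitTime_sub hw hsymm hij
  have hφ' := isUnitPotential_hitTime_sub hw' hsymm' hij
  rw [hφ.commuteTime_eq hw hsymm, hφ'.commuteTime_eq hw' hsymm', ← mul_assoc,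
    mul_left_comm _ 2, div_mul_cancel₀ _ hpos.ne']
  exact mul_le_mul_of_nonneg_left (hφ.sub_le_sub_of_le hw.nonneg hsymm hsymm' hle hφ')
    (mul_pos two_pos hpos').le

end CommuteTime

section AddEdge

theorem IsWeight.isIrreducibleWeight [Fintype V] {w : V → V → ℝ} (hw : IsWeight w) :
    IsIrreducibleWeight w :=
  ⟨hw.2.1, hw.2.2.2⟩

variable [DecidableEq V] {w : V → V → ℝ}

theorem le_addEdge (w : V → V → ℝ) (a b : V) {u : ℝ} (hu : 0 ≤ u) (x y : V) :
    w x y ≤ addEdge w a b u x y :=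
  le_add_of_nonneg_right (ite_nonneg hu le_rfl)

theorem addEdge_symm (hsymm : ∀ x y, w x y = w y x) (a b : V) (u : ℝ) (x y : V) :
    addEdge w a b u x y = addEdge w a b u y x := by
  simp only [addEdge, hsymm x y, and_comm, or_comm]

theorem gWeight_addEdge [Fintype V] (w : V → V → ℝ) {a b : V} (hab : a ≠ b) (u : ℝ) :
    gWeight (addEdge w a b u) = gWeight w + u := by
  have hsplit : ∀ x y, addEdge w a b u x y = w x y +
      ((if x = a then if y = b then u else 0 else 0) +
        if x = b then if y = a then u else 0 else 0) := by
    unfold addEdge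
    grind
  simp only [gWeight, hsplit, sum_add_distrib, sum_ite_irrel, sum_ite_eq', mem_univ, if_true,
    sum_const_zero]
  ring

end AddEdge

/-- Adding an edge `{a,b}` of weight `u > 0` increases the commute
time by a factor of at most `1 + u/ω(G)`: `κ'_{ij} ≤ (1 + u/ω(G))·κ_{ij}`. -/
theorem commute_time_edge_addition
    {V : Type*} [Fintype V] [DecidableEq V] (w : V → V → ℝ) (hw : IsWeight w)
    (a b : V) (hab : a ≠ b) (u : ℝ) (hu : 0 < u) (i j : V) :
    hitTime (walkStep (addEdge w a b u)) i j + hitTime (walkStep (addEdge w a b u)) j i ≤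
      (1 + u / gWeight w) *
        (hitTime (walkStep w) i j + hitTime (walkStep w) j i) := by
  simpa only [commuteTime, gWeight_addEdge w hab, add_div,
      div_self (hw.isIrreducibleWeight.gWeight_pos hab).ne'] using
    commute_time_edge_addition_general hw.isIrreducibleWeight hw.1 (addEdge_symm hw.1 a b u)
      (le_addEdge w a b hu.le) i j
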